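/- Let m > p ≥ 2, X a real m×p matrix, ν_i > 0, and w ∈ S_m with 0 ≤ w_l < 1 for every l and f(w) > 0; fix an index i and define a, b, A, B as in the context. If A ≠ B, A > 0, B > 0, a > b, aB > bA, and bA < (a−b)B, then max_{x ∈ [0,1]} h_i(x) = ((√(A(a−b)) − √(aB−bA))/(A−B))², and this maximum is attained at the unique point x* = (t* − B)/(A − B) ∈ (0,1), where t* = √(A(aB−bA)/(a−b)) and t* lies strictly between min{A,B} and max{A,B}. -/

import Mathlib

/-!
Moving the allocation along `w(x)` changes the information matrix by scaling and a rank-one term: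
`M(x) = (1 - x) M(0) + x ν_i v vᵀ`, with `v` the `i`-th row of the design matrix.  The matrix
determinant lemma (in its adjugate form, valid also when `M(0)` is singular) therefore gives
`f_i(x) = (1 - x)^(p-1) ((1 - x) b + x a)`, and likewise, with `p - 1` for `p`, for each principal
minor `f_{-j}`.  Since `tr M⁻¹ = (∑ j, f_{-j}) / f`, it follows that on `[0, 1]`
`h_i(x) = (1 - x) (b + (a - b) x) / (B + (A - B) x)`;
at the endpoints this agrees with the convention `h = 0` for singular `M`.

In the variable `t = B + (A - B) x` and with `c = a B - b A` this reads
`h = (A - t) ((a - b) t - c) / ((A - B)² t)`, and completing the square yields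
`h = ((√(A (a - b)) - √c) / (A - B))² - (a - b) (t - t*)² / ((A - B)² t)`,
where `(a - b) t*² = A c`.  This gives the maximum value, and its attainment only at `t = t*`.
-/

open Matrix

def dropIdx {p : ℕ} (j : Fin p) (k : Fin (p - 1)) : Fin p :=
  if h : (k : ℕ) < (j : ℕ) then ⟨k, lt_trans h j.isLt⟩
  else ⟨(k : ℕ) + 1, by have hk := k.isLt; omega⟩

noncomputable def infoM {m p : ℕ} (X : Matrix (Fin m) (Fin p) ℝ) (ν w : Fin m → ℝ) :
    Matrix (Fin p) (Fin p) ℝ :=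
  Xᵀ * Matrix.diagonal (fun i => w i * ν i) * X

noncomputable def fFun {m p : ℕ} (X : Matrix (Fin m) (Fin p) ℝ) (ν w : Fin m → ℝ) : ℝ :=
  (infoM X ν w).det

noncomputable def hFun {m p : ℕ} (X : Matrix (Fin m) (Fin p) ℝ) (ν w : Fin m → ℝ) : ℝ :=
  if 0 < fFun X ν w then ((infoM X ν w)⁻¹).trace⁻¹ else 0

noncomputable def fminus {m p : ℕ} (X : Matrix (Fin m) (Fin p) ℝ) (ν : Fin m → ℝ)
    (j : Fin p) (w : Fin m → ℝ) : ℝ :=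
  ((X.submatrix id (dropIdx j))ᵀ * Matrix.diagonal (fun i => w i * ν i)
    * X.submatrix id (dropIdx j)).det

noncomputable def liftW {m : ℕ} (w : Fin m → ℝ) (i : Fin m) (x : ℝ) : Fin m → ℝ :=
  fun l => if l = i then x else w l * (1 - x) / (1 - w i)

/-- The matrix determinant lemma in adjugate form.  For `N` positive definite it follows from the
version for invertible matrices; the semidefinite case is the limit of `N + ε I` as `ε → 0⁺`. -/
lemma det_add_smul_vecMulVec {n : ℕ} (N : Matrix (Fin n) (Fin n) ℝ) (hN : N.PosSemidef)
    (s : ℝ) (v : Fin n → ℝ) :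
    (N + s • vecMulVec v v).det = N.det + s * (v ⬝ᵥ (N.adjugate *ᵥ v)) := by
  have hpd : ∀ P : Matrix (Fin n) (Fin n) ℝ, P.PosDef →
      (P + s • vecMulVec v v).det = P.det + s * (v ⬝ᵥ (P.adjugate *ᵥ v)) := by
    intro P hP
    have hd : P.det ≠ 0 := hP.det_pos.ne'
    have h1 : s • vecMulVec v v = replicateCol Unit (s • v) * replicateRow Unit v := by
      rw [← vecMulVec_eq, smul_vecMulVec]
    have h2 : (1 + replicateRow Unit v * P⁻¹ * replicateCol Unit (s • v)).det
        = 1 + s * (P.det⁻¹ * (v ⬝ᵥ (P.adjugate *ᵥ v))) := by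
      rw [det_unique, Matrix.mul_assoc, ← replicateCol_mulVec, Matrix.add_apply, Matrix.one_apply_eq,
        replicateRow_mul_replicateCol_apply, mulVec_smul, dotProduct_smul, inv_def,
        Ring.inverse_eq_inv', smul_mulVec, dotProduct_smul]
      simp
    rw [h1, det_add_replicateCol_mul_replicateRow (isUnit_iff_ne_zero.mpr hd), h2]
    field_simp
  have hc : Continuous fun ε : ℝ => N + ε • (1 : Matrix (Fin n) (Fin n) ℝ) := by fun_prop
  have hl : Continuous fun ε : ℝ =>
      ((N + ε • (1 : Matrix (Fin n) (Fin n) ℝ)) + s • vecMulVec v v).det :=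
    (hc.add continuous_const).matrix_det
  have hr : Continuous fun ε : ℝ => (N + ε • (1 : Matrix (Fin n) (Fin n) ℝ)).det
      + s * (v ⬝ᵥ ((N + ε • (1 : Matrix (Fin n) (Fin n) ℝ)).adjugate *ᵥ v)) :=
    hc.matrix_det.add (continuous_const.mul
      (continuous_const.dotProduct (hc.matrix_adjugate.matrix_mulVec continuous_const)))
  have tl := (hl.tendsto 0).mono_left (nhdsWithin_le_nhds (s := Set.Ioi 0))
  have tr := (hr.tendsto 0).mono_left (nhdsWithin_le_nhds (s := Set.Ioi 0))
  have key := tendsto_nhds_unique_of_eventuallyEq tl tr (by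
    filter_upwards [self_mem_nhdsWithin] with ε hε
    exact hpd _ (Matrix.PosDef.posSemidef_add hN (PosDef.one.smul hε)))
  simpa using key

/-- The weighted Gram matrix along the segment `w(x)` is a rank-one update of its value at `0`. -/
lemma gram_liftW {m n : ℕ} (Y : Matrix (Fin m) (Fin n) ℝ) (ν w : Fin m → ℝ) (i : Fin m) (x : ℝ) :
    infoM Y ν (liftW w i x)
      = (1 - x) • infoM Y ν (liftW w i 0) + (x * ν i) • vecMulVec (Y i) (Y i) := by
  have hd : Matrix.diagonal (fun l => liftW w i x l * ν l)
      = (1 - x) • Matrix.diagonal (fun l => liftW w i 0 l * ν l)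
        + (x * ν i) • vecMulVec (Pi.single i 1) (Pi.single i 1) := by
    ext k l
    rcases eq_or_ne k l with rfl | hkl
    · rcases eq_or_ne k i with rfl | hk
      · simp [liftW, vecMulVec_apply]
      · simp [liftW, vecMulVec_apply, hk]
        ring
    · rcases eq_or_ne k i with rfl | hk
      · simp [vecMulVec_apply, hkl, hkl.symm]
      · simp [vecMulVec_apply, hkl, hk]
  have hv : Yᵀ *ᵥ Pi.single i 1 = Y i := by ext; simp
  have hv' : Pi.single i 1 ᵥ* Y = Y i := by ext; simp
  unfold infoM
  rw [hd, Matrix.mul_add, Matrix.add_mul, Matrix.mul_smul, Matrix.smul_mul, Matrix.mul_smul,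
    Matrix.smul_mul, mul_vecMulVec, vecMulVec_mul, hv, hv']

lemma infoM_posSemidef {m n : ℕ} (Y : Matrix (Fin m) (Fin n) ℝ) (ν w : Fin m → ℝ)
    (hν : ∀ l, 0 < ν l) (hw : ∀ l, 0 ≤ w l) : (infoM Y ν w).PosSemidef := by
  have h : (Matrix.diagonal fun l => w l * ν l).PosSemidef :=
    posSemidef_diagonal_iff.mpr fun l => mul_nonneg (hw l) (hν l).le
  simpa [infoM, conjTranspose_eq_transpose_of_trivial] using h.conjTranspose_mul_mul_same Y

lemma liftW_zero_nonneg {m : ℕ} (w : Fin m → ℝ) (hw0 : ∀ l, 0 ≤ w l) (hwlt : ∀ l, w l < 1)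
    (i l : Fin m) : 0 ≤ liftW w i 0 l := by
  unfold liftW
  split_ifs
  · exact le_rfl
  · exact div_nonneg (by simpa using hw0 l) (sub_nonneg.mpr (hwlt i).le)

/-- Along `w(x)` the determinant of an `(n + 1)`-column design is `(1 - x)^n` times an affine
function of `x`, which is recovered from the values at `0` and `1/2`. -/
lemma fFun_liftW {m n : ℕ} (Y : Matrix (Fin m) (Fin (n + 1)) ℝ) (ν w : Fin m → ℝ)
    (hν : ∀ l, 0 < ν l) (hw0 : ∀ l, 0 ≤ w l) (hwlt : ∀ l, w l < 1) (i : Fin m) {x : ℝ}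
    (hx : x ≤ 1) :
    fFun Y ν (liftW w i x) = (1 - x) ^ n * ((1 - x) * fFun Y ν (liftW w i 0)
      + x * (2 ^ (n + 1) * fFun Y ν (liftW w i (1 / 2)) - fFun Y ν (liftW w i 0))) := by
  have hpsd := infoM_posSemidef Y ν _ hν (liftW_zero_nonneg w hw0 hwlt i)
  obtain ⟨K, hK⟩ : ∃ K, ∀ y : ℝ, y ≤ 1 → fFun Y ν (liftW w i y)
      = (1 - y) ^ (n + 1) * fFun Y ν (liftW w i 0) + y * (1 - y) ^ n * K := by
    refine ⟨ν i * (Y i ⬝ᵥ ((infoM Y ν (liftW w i 0)).adjugate *ᵥ Y i)), fun y hy => ?_⟩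
    unfold fFun
    rw [gram_liftW, det_add_smul_vecMulVec _ (hpsd.smul (sub_nonneg.mpr hy)), det_smul,
      adjugate_smul, smul_mulVec, dotProduct_smul, Fintype.card_fin, Nat.add_sub_cancel, smul_eq_mul]
    ring
  have h2 : 2 ^ (n + 1) * fFun Y ν (liftW w i (1 / 2)) = fFun Y ν (liftW w i 0) + K := by
    have e : (2 : ℝ) ^ n * (1 / 2) ^ n = 1 := by rw [← mul_pow]; norm_num
    rw [hK (1 / 2) (by norm_num), show (1 - 1 / 2 : ℝ) = 1 / 2 by norm_num, pow_succ, pow_succ]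
    linear_combination (fFun Y ν (liftW w i 0) + K) * e
  rw [h2, hK x hx]
  ring

lemma dropIdx_eq_succAbove {n : ℕ} (j : Fin (n + 1)) :
    (dropIdx j : Fin n → Fin (n + 1)) = j.succAbove := by
  funext k
  ext
  by_cases h : (k : ℕ) < j
  · simp [dropIdx, Fin.succAbove, Fin.lt_def, h]
  · simp [dropIdx, Fin.succAbove, Fin.lt_def, h]

lemma fminus_eq_fFun {m n : ℕ} (X : Matrix (Fin m) (Fin (n + 1)) ℝ) (ν w : Fin m → ℝ)
    (j : Fin (n + 1)) : fminus X ν j w = fFun (X.submatrix id j.succAbove) ν w := by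
  rw [← dropIdx_eq_succAbove]
  rfl

/-- The diagonal entries of the adjugate of the information matrix are the minors `f_{-j}`. -/
lemma trace_inv_infoM {m n : ℕ} (X : Matrix (Fin m) (Fin (n + 1)) ℝ) (ν w : Fin m → ℝ) :
    ((infoM X ν w)⁻¹).trace = (fFun X ν w)⁻¹ * ∑ j, fminus X ν j w := by
  rw [inv_def, Ring.inverse_eq_inv', trace_smul, smul_eq_mul]
  congr 1
  refine Finset.sum_congr rfl fun j _ => ?_
  rw [diag_apply, adjugate_fin_succ_eq_det_submatrix, fminus_eq_fFun, ← two_mul, pow_mul]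
  simp only [neg_one_sq, one_pow, one_mul]
  rfl

/-- Closed form of `h_i` on all of `[0, 1]`; where `f = 0` both sides vanish. -/
lemma hFun_liftW {m n : ℕ} (X : Matrix (Fin m) (Fin (n + 2)) ℝ) (ν : Fin m → ℝ)
    (hν : ∀ l, 0 < ν l) (w : Fin m → ℝ) (hw0 : ∀ l, 0 ≤ w l) (hwlt : ∀ l, w l < 1) (i : Fin m)
    (a b A B : ℝ)
    (hb : b = fFun X ν (liftW w i 0))
    (ha : a = 2 ^ (n + 2) * fFun X ν (liftW w i (1 / 2)) - b)
    (hB : B = ∑ j, fminus X ν j (liftW w i 0))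
    (hA : A = ∑ j, (2 ^ (n + 1) * fminus X ν j (liftW w i (1 / 2))
        - fminus X ν j (liftW w i 0)))
    (hb0 : 0 ≤ b) (hab : b < a) (x : ℝ) (hx0 : 0 ≤ x) (hx1 : x ≤ 1) :
    hFun X ν (liftW w i x) = (1 - x) * (b + (a - b) * x) / (B + (A - B) * x) := by
  have hf : fFun X ν (liftW w i x) = (1 - x) ^ (n + 1) * (b + (a - b) * x) := by
    rw [fFun_liftW X ν w hν hw0 hwlt i hx1, ← hb, ← ha]
    ring
  have hs : ∑ j, fminus X ν j (liftW w i x) = (1 - x) ^ n * (B + (A - B) * x) := by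
    have : ∀ j, fminus X ν j (liftW w i x) = (1 - x) ^ n * ((1 - x) * fminus X ν j (liftW w i 0)
        + x * (2 ^ (n + 1) * fminus X ν j (liftW w i (1 / 2)) - fminus X ν j (liftW w i 0))) := by
      intro j
      simp only [fminus_eq_fFun]
      exact fFun_liftW _ ν w hν hw0 hwlt i hx1
    rw [Finset.sum_congr rfl fun j _ => this j, ← Finset.mul_sum, Finset.sum_add_distrib,
      ← Finset.mul_sum, ← Finset.mul_sum, ← hA, ← hB]
    ring
  unfold hFun
  split_ifs with hpos
  · have hx : 1 - x ≠ 0 := by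
      rintro h
      rw [hf, h] at hpos
      simp at hpos
    rw [trace_inv_infoM, hs, hf, mul_inv, inv_inv, ← div_eq_mul_inv, pow_succ, mul_assoc,
      mul_div_mul_left _ _ (pow_ne_zero n hx)]
  · have hn : 0 ≤ b + (a - b) * x := by nlinarith
    have hz : (1 - x) * (b + (a - b) * x) = 0 := by
      by_contra hne
      have h1 : 0 < 1 - x :=
        lt_of_le_of_ne (by linarith) fun h => hne (by rw [← h, zero_mul])
      have h2 : 0 < b + (a - b) * x :=
        lt_of_le_of_ne hn fun h => hne (by rw [← h, mul_zero])
      exact hpos (hf ▸ mul_pos (pow_pos h1 _) h2)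
    rw [hz, zero_div]

/-- The one-variable optimisation: `g` stands for `h_i` restricted to `[0, 1]`. -/
lemma optimum (g : ℝ → ℝ) (a b A B : ℝ) (hb0 : 0 ≤ b)
    (hg : ∀ x, 0 ≤ x → x ≤ 1 → g x = (1 - x) * (b + (a - b) * x) / (B + (A - B) * x))
    (hAB : A ≠ B) (hApos : 0 < A) (hBpos : 0 < B) (hab : b < a)
    (haBbA : b * A < a * B) (hbAB : b * A < (a - b) * B)
    (tstar xstar : ℝ)
    (htstar : tstar = Real.sqrt (A * (a * B - b * A) / (a - b)))
    (hxstar : xstar = (tstar - B) / (A - B)) :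
    (min A B < tstar ∧ tstar < max A B) ∧
    (0 < xstar ∧ xstar < 1) ∧
    g xstar = ((Real.sqrt (A * (a - b)) - Real.sqrt (a * B - b * A)) / (A - B)) ^ 2 ∧
    (∀ x ∈ Set.Icc (0 : ℝ) 1, g x ≤ g xstar) ∧
    (∀ x ∈ Set.Icc (0 : ℝ) 1, g x = g xstar → x = xstar) := by
  have hd : 0 < a - b := sub_pos.mpr hab
  have hc : 0 < a * B - b * A := sub_pos.mpr haBbA
  have hD : A - B ≠ 0 := sub_ne_zero.mpr hAB
  have ht0 : 0 < tstar := by rw [htstar]; positivity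
  have hsq : (a - b) * tstar ^ 2 = A * (a * B - b * A) := by
    rw [htstar, Real.sq_sqrt (by positivity)]
    field_simp
  have ha0 : 0 < a := lt_of_le_of_lt hb0 hab
  -- The signs of `A - t*` and `t* - B` are those of the right-hand sides below.
  have hA2 : (a - b) * (A ^ 2 - tstar ^ 2) = A * a * (A - B) := by linear_combination -hsq
  have hB2 : (a - b) * (tstar ^ 2 - B ^ 2) = ((a - b) * B - b * A) * (A - B) := by
    linear_combination hsq
  have he : 0 < (a - b) * B - b * A := sub_pos.mpr hbAB
  have hbetween : (B < A ∧ B < tstar ∧ tstar < A) ∨ (A < B ∧ A < tstar ∧ tstar < B) := by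
    rcases lt_or_gt_of_ne hAB with h | h
    · right
      have h' : A - B < 0 := sub_neg.mpr h
      have p1 : A ^ 2 - tstar ^ 2 < 0 :=
        (pos_iff_neg_of_mul_neg (hA2 ▸ mul_neg_of_pos_of_neg (by positivity) h')).mp hd
      have p2 : tstar ^ 2 - B ^ 2 < 0 :=
        (pos_iff_neg_of_mul_neg (hB2 ▸ mul_neg_of_pos_of_neg he h')).mp hd
      exact ⟨h, by nlinarith, by nlinarith⟩
    · left
      have h' : 0 < A - B := sub_pos.mpr h
      have p1 : 0 < A ^ 2 - tstar ^ 2 :=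
        (pos_iff_pos_of_mul_pos (hA2 ▸ mul_pos (by positivity) h')).mp hd
      have p2 : 0 < tstar ^ 2 - B ^ 2 :=
        (pos_iff_pos_of_mul_pos (hB2 ▸ mul_pos he h')).mp hd
      exact ⟨h, by nlinarith, by nlinarith⟩
  have hx01 : 0 < xstar ∧ xstar < 1 := by
    rw [hxstar]
    rcases hbetween with ⟨h, h1, h2⟩ | ⟨h, h1, h2⟩
    · exact ⟨div_pos (by linarith) (by linarith), (div_lt_one (by linarith)).mpr (by linarith)⟩
    · exact ⟨div_pos_of_neg_of_neg (by linarith) (by linarith),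
        (div_lt_one_of_neg (by linarith)).mpr (by linarith)⟩
  have htx : tstar = B + (A - B) * xstar := by
    rw [hxstar]
    field_simp
    ring
  have hcross : Real.sqrt (A * (a - b)) * Real.sqrt (a * B - b * A) = (a - b) * tstar := by
    rw [← Real.sqrt_mul (by positivity), Real.sqrt_eq_iff_mul_self_eq (by positivity) (by positivity)]
    linear_combination -(a - b) * hsq
  have hs1 := Real.sq_sqrt (show 0 ≤ A * (a - b) by positivity)
  have hs2 := Real.sq_sqrt hc.le
  set V := ((Real.sqrt (A * (a - b)) - Real.sqrt (a * B - b * A)) / (A - B)) ^ 2 with hV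
  have hVD : V * (A - B) ^ 2 = A * (a - b) + (a * B - b * A) - 2 * ((a - b) * tstar) := by
    rw [hV, div_pow, div_mul_cancel₀ _ (pow_ne_zero 2 hD)]
    linear_combination hs1 + hs2 - 2 * hcross
  have ht : ∀ x, 0 ≤ x → x ≤ 1 → 0 < B + (A - B) * x := by
    intro x h0 h1
    have : B + (A - B) * x = B * (1 - x) + A * x := by ring
    rw [this]
    rcases h0.eq_or_lt with rfl | h
    · simpa using hBpos
    · have := mul_pos hApos h
      have := mul_nonneg hBpos.le (sub_nonneg.mpr h1)
      linarith
  have hform : ∀ x, 0 ≤ x → x ≤ 1 → g x = V - (a - b) * (x - xstar) ^ 2 / (B + (A - B) * x) := by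
    intro x h0 h1
    have hpos := ht x h0 h1
    rw [hg x h0 h1, eq_sub_iff_add_eq, ← add_div, div_eq_iff hpos.ne']
    have h2 : (A - B) ^ 2 ≠ 0 := pow_ne_zero 2 hD
    apply mul_left_cancel₀ h2
    have hxs : (A - B) * (x - xstar) = B + (A - B) * x - tstar := by rw [htx]; ring
    linear_combination (a - b) * ((A - B) * (x - xstar) + (B + (A - B) * x - tstar)) * hxs
      - (B + (A - B) * x) * hVD + hsq
  have hgs : g xstar = V := by
    rw [hform xstar hx01.1.le hx01.2.le]
    simp
  refine ⟨?_, hx01, hgs, ?_, ?_⟩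
  · rcases hbetween with ⟨h, h1, h2⟩ | ⟨h, h1, h2⟩
    · rw [min_eq_right h.le, max_eq_left h.le]
      exact ⟨h1, h2⟩
    · rw [min_eq_left h.le, max_eq_right h.le]
      exact ⟨h1, h2⟩
  · rintro x ⟨h0, h1⟩
    rw [hgs, hform x h0 h1]
    have := ht x h0 h1
    exact sub_le_self _ (by positivity)
  · rintro x ⟨h0, h1⟩ hx
    rw [hgs, hform x h0 h1, sub_eq_self, div_eq_zero_iff] at hx
    rcases hx with hx | hx
    · rcases mul_eq_zero.mp hx with hx | hx
      · exact absurd hx hd.ne'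
      · exact sub_eq_zero.mp (pow_eq_zero_iff two_ne_zero |>.mp hx)
    · exact absurd hx (ht x h0 h1).ne'

theorem stmt10 {m p : ℕ} (hp : 2 ≤ p) (hmp : p < m)
    (X : Matrix (Fin m) (Fin p) ℝ) (ν : Fin m → ℝ) (hν : ∀ l, 0 < ν l)
    (w : Fin m → ℝ) (hw0 : ∀ l, 0 ≤ w l) (hw1 : ∑ l, w l = 1)
    (hwlt : ∀ l, w l < 1) (hf : 0 < fFun X ν w) (i : Fin m)
    (a b A B : ℝ)
    (hb : b = fFun X ν (liftW w i 0))
    (ha : a = 2 ^ p * fFun X ν (liftW w i (1 / 2)) - b)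
    (hB : B = ∑ j, fminus X ν j (liftW w i 0))
    (hA : A = ∑ j, (2 ^ (p - 1) * fminus X ν j (liftW w i (1 / 2))
        - fminus X ν j (liftW w i 0)))
    (hAB : A ≠ B) (hApos : 0 < A) (hBpos : 0 < B) (hab : b < a)
    (haBbA : b * A < a * B) (hbAB : b * A < (a - b) * B)
    (tstar xstar : ℝ)
    (htstar : tstar = Real.sqrt (A * (a * B - b * A) / (a - b)))
    (hxstar : xstar = (tstar - B) / (A - B)) :
    (min A B < tstar ∧ tstar < max A B) ∧
    (0 < xstar ∧ xstar < 1) ∧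
    hFun X ν (liftW w i xstar)
      = ((Real.sqrt (A * (a - b)) - Real.sqrt (a * B - b * A)) / (A - B)) ^ 2 ∧
    (∀ x ∈ Set.Icc (0 : ℝ) 1, hFun X ν (liftW w i x) ≤ hFun X ν (liftW w i xstar)) ∧
    (∀ x ∈ Set.Icc (0 : ℝ) 1,
      hFun X ν (liftW w i x) = hFun X ν (liftW w i xstar) → x = xstar) := by
  obtain ⟨n, rfl⟩ : ∃ n, p = n + 2 := ⟨p - 2, by omega⟩
  have hb0 : 0 ≤ b :=
    hb ▸ (infoM_posSemidef X ν _ hν (liftW_zero_nonneg w hw0 hwlt i)).det_nonneg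
  exact optimum (fun x => hFun X ν (liftW w i x)) a b A B hb0
    (fun x h0 h1 => hFun_liftW X ν hν w hw0 hwlt i a b A B hb ha hB hA hb0 hab x h0 h1)
    hAB hApos hBpos hab haBbA hbAB tstar xstar htstar hxstar
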